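/- arXiv:1307.3649 — 3 statements merged into one kernel-verified Lean document; each statement's English description precedes it below -/
import Mathlib

section
/- First family of quadratic forms in the remainders: let q_1, …, q_s be positive integers, let r_1, …, r_{2s+2} be the associated remainder sequence of the symmetric Euclidean scheme with n = r_1, and let i, j be integers with 0 ≤ j ≤ i ≤ s. Let r'_1, r'_2, … denote the remainder sequence of the symmetric Euclidean scheme associated to the truncated sequence (q_{i−j+1}, …, q_s). Then r_{i−j+1}·r_{i+j+1} + r_{2s+2−i−j}·r_{2s+2−i+j} = n·r'_{2j+1}. -/
/-- Auxiliary for continuants: `contAux u i n` is the continuant `𝔠_{i, i+n-1}` of the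
sequence `u`, computed via the recurrence `𝔠_{i,j} = u j * 𝔠_{i,j-1} + 𝔠_{i,j-2}`. -/
def contAux (u : ℤ → ℤ) (i : ℤ) : ℕ → ℤ
  | 0 => 1
  | 1 => u i
  | n + 2 => u (i + n + 1) * contAux u i (n + 1) + contAux u i n

/-- `cont u i j` is the continuant `𝔠_{i,j}` of the sequence `u`, with the boundary
conventions `𝔠_{j+1,j} = 1` and `𝔠_{i,j} = 0` for `i > j + 1` (in particular
`𝔠_{j+2,j} = 0`), and the recurrence `𝔠_{i,j} = u j * 𝔠_{i,j-1} + 𝔠_{i,j-2}`. -/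
def cont (u : ℤ → ℤ) (i j : ℤ) : ℤ :=
  if j + 1 < i then 0 else contAux u i (j + 1 - i).toNat

/-- The symmetric doubling of `(q_1, …, q_s)`:
`(Q_1, …, Q_{2s}) = (q_1, …, q_s, q_s, …, q_1)`. -/
def symQuot (q : ℤ → ℤ) (s : ℕ) (k : ℤ) : ℤ :=
  if k ≤ (s : ℤ) then q k else q (2 * (s : ℤ) + 1 - k)

/-- Auxiliary: `symAux q s m` is the remainder `r_{2s+2-m}` of the symmetric
Euclidean scheme attached to `(q_1, …, q_s)`. -/
def symAux (q : ℤ → ℤ) (s : ℕ) : ℕ → ℤ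
  | 0 => 0
  | 1 => 1
  | m + 2 => symQuot q s (2 * (s : ℤ) - (m : ℤ)) * symAux q s (m + 1) + symAux q s m

/-- `symRem q s k` is the remainder `r_k` of the symmetric Euclidean scheme attached to
`(q_1, …, q_s)`: with `(Q_1, …, Q_{2s}) = (q_1, …, q_s, q_s, …, q_1)`, one has
`r_{2s+2} = 0`, `r_{2s+1} = 1`, and `r_k = Q_k * r_{k+1} + r_{k+2}` for `1 ≤ k ≤ 2s`. -/
def symRem (q : ℤ → ℤ) (s : ℕ) (k : ℤ) : ℤ :=
  symAux q s (2 * (s : ℤ) + 2 - k).toNat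

/-!
Every remainder of the symmetric scheme is a continuant of the doubled sequence `Q`, namely
`r_k = 𝔠_{k,2s}`, and since `Q` is a palindrome also `r_k = 𝔠_{1,2s+1-k}`. Truncating `q` drops the
first and last `i - j` terms of `Q`, so `r'_{2j+1} = 𝔠_{i+j+1,2s-i+j} = 𝔠_{i-j+1,2s-i-j}`.
The claim is then Euler's identity
`𝔠_{l,n} 𝔠_{a,b} = 𝔠_{l,b} 𝔠_{a,n} + (-1)^{b+1-a} 𝔠_{l,a-2} 𝔠_{b+2,n}`
for `l = 1`, `n = 2s`, `a = i-j+1` and `b = 2s-i-j`, where the sign is `(-1)^{2(s-i)} = 1`.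
-/

@[elab_as_elim]
theorem int_two_step_le_induction {b : ℤ} {motive : ∀ n, b ≤ n → Prop}
    (base : motive b le_rfl) (base_succ : motive (b + 1) (by lia))
    (step : ∀ n (hn : b ≤ n), motive n hn → motive (n + 1) (by lia) → motive (n + 2) (by lia))
    (n : ℤ) (hn : b ≤ n) : motive n hn := by
  suffices pair : motive n hn ∧ motive (n + 1) (by lia) from pair.1
  induction n, hn using Int.leInduction with
  | base => exact ⟨base, base_succ⟩
  | succ n hn ih =>
    refine ⟨ih.2, ?_⟩
    simpa only [add_assoc, one_add_one_eq_two] using step n hn ih.1 ih.2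

@[elab_as_elim]
theorem int_two_step_le_induction_down {b : ℤ} {motive : ∀ n, n ≤ b → Prop}
    (base : motive b le_rfl) (base_pred : motive (b - 1) (by lia))
    (step : ∀ n (hn : n + 2 ≤ b), motive (n + 2) hn → motive (n + 1) (by lia) →
      motive n (by lia))
    (n : ℤ) (hn : n ≤ b) : motive n hn := by
  suffices pair : motive n hn ∧ motive (n - 1) (by lia) from pair.1
  induction n, hn using Int.leInductionDown with
  | base => exact ⟨base, base_pred⟩
  | pred n hn ih =>
    refine ⟨ih.2, step (n - 1 - 1) (by lia) ?_ ?_⟩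
    · simpa only [sub_sub, one_add_one_eq_two, sub_add_cancel] using ih.1
    · simpa only [sub_add_cancel] using ih.2

section Continuants

variable (u : ℤ → ℤ)

theorem cont_of_add_one_lt {i j : ℤ} (h : j + 1 < i) : cont u i j = 0 :=
  if_pos h

theorem cont_add_one_left (j : ℤ) : cont u (j + 1) j = 1 := by
  simp [cont, contAux]

theorem cont_sub_one_right (i : ℤ) : cont u i (i - 1) = 1 := by
  simp [cont, contAux]

theorem cont_self (i : ℤ) : cont u i i = u i := by
  simp [cont, contAux]

theorem cont_right_rec {i j : ℤ} (h : i ≤ j) :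
    cont u i j = u j * cont u i (j - 1) + cont u i (j - 2) := by
  obtain ⟨m, rfl⟩ := Int.le.dest h
  cases m with
  | zero =>
    have empty : cont u i (i - 2) = 0 := cont_of_add_one_lt u (by lia)
    rw [Nat.cast_zero, add_zero, empty, cont_self, cont_sub_one_right, mul_one, add_zero]
  | succ m =>
    have length : (i + (m + 1 : ℕ) + 1 - i).toNat = m + 2 := by lia
    have length_sub_one : (i + (m + 1 : ℕ) - 1 + 1 - i).toNat = m + 1 := by lia
    have length_sub_two : (i + (m + 1 : ℕ) - 2 + 1 - i).toNat = m := by lia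
    rw [cont, cont, cont, if_neg (by lia), if_neg (by lia), if_neg (by lia), length,
      length_sub_one, length_sub_two, contAux]
    push_cast
    rw [add_assoc i]

theorem cont_eq_mul_add_mul {i k j : ℤ} (hik : i ≤ k + 1) (hkj : k ≤ j) :
    cont u i j = cont u i k * cont u (k + 1) j + cont u i (k - 1) * cont u (k + 2) j := by
  induction j, hkj using int_two_step_le_induction with
  | base => simp [cont_add_one_left, cont_of_add_one_lt]
  | base_succ =>
    have cont_last : cont u (k + 2) (k + 1) = 1 := by
      simpa only [add_assoc, one_add_one_eq_two] using cont_add_one_left u (k + 1)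
    rw [cont_right_rec u hik, add_sub_cancel_right, cont_self, cont_last,
      show k + 1 - 2 = k - 1 by ring]
    ring
  | step n hkn ih ih_succ =>
    have right_rec {l : ℤ} (hl : l ≤ k + 2) :
        cont u l (n + 2) = u (n + 2) * cont u l (n + 1) + cont u l n := by
      rw [cont_right_rec u (by lia), add_sub_cancel_right, show n + 2 - 1 = n + 1 by ring]
    rw [right_rec (by lia), right_rec (by lia), right_rec le_rfl]
    linear_combination u (n + 2) * ih_succ + ih

theorem cont_left_rec {i j : ℤ} (h : i ≤ j) :
    cont u i j = u i * cont u (i + 1) j + cont u (i + 2) j := by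
  rw [cont_eq_mul_add_mul u (by lia) h, cont_self, cont_sub_one_right, one_mul]

variable {u} in
theorem eq_cont_of_left_rec {f : ℤ → ℤ} {j : ℤ} (hzero : ∀ i, j + 1 < i → f i = 0)
    (hone : f (j + 1) = 1) (hrec : ∀ i ≤ j, f i = u i * f (i + 1) + f (i + 2)) (i : ℤ) :
    f i = cont u i j := by
  rcases lt_or_ge (j + 2) i with hi | hi
  · rw [hzero i (by lia), cont_of_add_one_lt u (by lia)]
  induction i, hi using int_two_step_le_induction_down with
  | base => rw [hzero _ (by lia), cont_of_add_one_lt u (by lia)]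
  | base_pred => rw [show j + 2 - 1 = j + 1 by ring, hone, cont_add_one_left]
  | step i hi ih ih_succ => rw [hrec i (by lia), cont_left_rec u (by lia), ih, ih_succ]

theorem cont_comp_add_right (d i j : ℤ) :
    cont (fun k => u (k + d)) i j = cont u (i + d) (j + d) := by
  refine (eq_cont_of_left_rec (f := fun i => cont u (i + d) (j + d)) ?_ ?_ ?_ i).symm
  · exact fun i hi => cont_of_add_one_lt u (by lia)
  · simp only [add_right_comm j 1 d, cont_add_one_left]
  · intro i hi
    simp only [add_right_comm i _ d]
    exact cont_left_rec u (by lia)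

theorem cont_comp_sub_left (c i j : ℤ) :
    cont (fun k => u (c - k)) i j = cont u (c - j) (c - i) := by
  refine (eq_cont_of_left_rec (f := fun i => cont u (c - j) (c - i)) ?_ ?_ ?_ i).symm
  · exact fun i hi => cont_of_add_one_lt u (by lia)
  · simp only [← sub_sub, cont_sub_one_right]
  · intro i hi
    simp only [← sub_sub c i]
    exact cont_right_rec u (by lia)

theorem cont_euler_identity {l a b n : ℤ} (hla : l ≤ a) (hab : a ≤ b + 2) (hbn : b ≤ n) :
    cont u l n * cont u a b =
      cont u l b * cont u a n +
        (b + 1 - a).negOnePow * (cont u l (a - 2) * cont u (b + 2) n) := by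
  induction a, hab using int_two_step_le_induction_down with
  | base => simp [cont_of_add_one_lt]
  | base_pred =>
    rw [show b + 2 - 1 = b + 1 by ring] at hla ⊢
    rw [cont_add_one_left, cont_eq_mul_add_mul u hla hbn, sub_self, Int.negOnePow_zero,
      Units.val_one, show b + 1 - 2 = b - 1 by ring]
    ring
  | step a hab ih ih_succ =>
    -- Solving the right recurrence of `𝔠_{l,a}` for `𝔠_{l,a-2}` flips the sign of the linear term;
    -- the alternating sign absorbs this, so both sides satisfy the left recurrence in `a`.
    have sign_succ : (b + 1 - (a + 1)).negOnePow = -(b + 1 - a).negOnePow := by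
      rw [← sub_sub, Int.negOnePow_sub, Int.negOnePow_one, mul_neg_one]
    have sign_add_two : (b + 1 - (a + 2)).negOnePow = (b + 1 - a).negOnePow := by
      rw [← sub_sub, Int.negOnePow_sub, Int.negOnePow_even 2 even_two, mul_one]
    specialize ih (by lia)
    specialize ih_succ (by lia)
    rw [sign_add_two, add_sub_cancel_right, cont_right_rec u hla] at ih
    rw [sign_succ, Units.val_neg, show a + 1 - 2 = a - 1 by ring] at ih_succ
    rw [cont_left_rec u (show a ≤ b by lia), cont_left_rec u (show a ≤ n by lia)]
    linear_combination u a * ih_succ + ih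

end Continuants

section SymmetricScheme

variable (q : ℤ → ℤ) (s : ℕ)

theorem symQuot_reflect (k : ℤ) : symQuot q s (2 * s + 1 - k) = symQuot q s k := by
  grind [symQuot]

variable {s} in
theorem symQuot_comp_add_right {t : ℕ} {d : ℤ} (h : (s : ℤ) = t + d) (k : ℤ) :
    symQuot (fun k => q (k + d)) t k = symQuot q s (k + d) := by
  grind [symQuot]

theorem symRem_rec {k : ℤ} (h : k ≤ 2 * s) :
    symRem q s k = symQuot q s k * symRem q s (k + 1) + symRem q s (k + 2) := by
  obtain ⟨m, rfl⟩ : ∃ m : ℕ, k = 2 * s - m := ⟨(2 * s - k).toNat, by lia⟩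
  have length : (2 * (s : ℤ) + 2 - (2 * s - m)).toNat = m + 2 := by lia
  have length_sub_one : (2 * (s : ℤ) + 2 - (2 * s - m + 1)).toNat = m + 1 := by lia
  have length_sub_two : (2 * (s : ℤ) + 2 - (2 * s - m + 2)).toNat = m := by lia
  simp only [symRem, length, length_sub_one, length_sub_two, symAux]

theorem symRem_eq_cont (k : ℤ) : symRem q s k = cont (symQuot q s) k (2 * s) := by
  refine eq_cont_of_left_rec (fun k hk => ?_) ?_ (fun k => symRem_rec q s) k
  · rw [symRem, Int.toNat_of_nonpos (by lia), symAux]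
  · simp [symRem, symAux]

theorem cont_symQuot_reflect (i j : ℤ) :
    cont (symQuot q s) (2 * s + 1 - j) (2 * s + 1 - i) = cont (symQuot q s) i j := by
  simp only [← cont_comp_sub_left, symQuot_reflect]

theorem symRem_eq_cont_one (k : ℤ) :
    symRem q s k = cont (symQuot q s) 1 (2 * s + 1 - k) := by
  rw [symRem_eq_cont, ← cont_symQuot_reflect, add_sub_cancel_left]

variable {s} in
theorem symRem_comp_add_right {t : ℕ} {d : ℤ} (h : (s : ℤ) = t + d) (k : ℤ) :
    symRem (fun k => q (k + d)) t k = cont (symQuot q s) (d + 1) (2 * s + 1 - (k + d)) := by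
  rw [symRem_eq_cont, funext (symQuot_comp_add_right q h), cont_comp_add_right,
    ← cont_symQuot_reflect]
  congr 1
  lia

end SymmetricScheme

theorem first_family_of_quadratic_forms_general
    (s : ℕ) (q : ℤ → ℤ) (i j : ℕ) (hji : j ≤ i) (his : i ≤ s) :
    symRem q s ((i : ℤ) - (j : ℤ) + 1) * symRem q s ((i : ℤ) + (j : ℤ) + 1) +
        symRem q s (2 * (s : ℤ) + 2 - (i : ℤ) - (j : ℤ)) *
          symRem q s (2 * (s : ℤ) + 2 - (i : ℤ) + (j : ℤ)) =
      symRem q s 1 *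
        symRem (fun k => q (k + (i : ℤ) - (j : ℤ))) (s - i + j) (2 * (j : ℤ) + 1) := by
  have rem_add : symRem q s (i + j + 1) = cont (symQuot q s) 1 (2 * s - i - j) := by
    rw [symRem_eq_cont_one]
    congr 1
    ring
  have rem_reflect_sub :
      symRem q s (2 * s + 2 - i + j) = cont (symQuot q s) 1 (i - j + 1 - 2) := by
    rw [symRem_eq_cont_one]
    congr 1
    ring
  have rem_truncated : symRem (fun k => q (k + i - j)) (s - i + j) (2 * j + 1) =
      cont (symQuot q s) (i - j + 1) (2 * s - i - j) := by
    simp only [add_sub_assoc _ (i : ℤ) (j : ℤ)]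
    rw [symRem_comp_add_right q (s := s) (by lia)]
    congr 1
    ring
  have sign : (2 * (s : ℤ) - i - j + 1 - (i - j + 1)).negOnePow = 1 :=
    Int.negOnePow_even _ ⟨s - i, by ring⟩
  have euler := cont_euler_identity (symQuot q s) (l := 1) (a := i - j + 1) (b := 2 * s - i - j)
    (n := 2 * s) (by lia) (by lia) (by lia)
  rw [sign, Units.val_one, show 2 * (s : ℤ) - i - j + 2 = 2 * s + 2 - i - j by ring] at euler
  rw [rem_add, rem_reflect_sub, rem_truncated, symRem_eq_cont, symRem_eq_cont, symRem_eq_cont]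
  linear_combination -euler

theorem first_family_of_quadratic_forms
    (s : ℕ) (hs : 1 ≤ s) (q : ℤ → ℤ) (hq : ∀ k : ℤ, 1 ≤ k → k ≤ (s : ℤ) → 0 < q k)
    (i j : ℕ) (hji : j ≤ i) (his : i ≤ s) :
    symRem q s ((i : ℤ) - (j : ℤ) + 1) * symRem q s ((i : ℤ) + (j : ℤ) + 1) +
        symRem q s (2 * (s : ℤ) + 2 - (i : ℤ) - (j : ℤ)) *
          symRem q s (2 * (s : ℤ) + 2 - (i : ℤ) + (j : ℤ)) =
      symRem q s 1 *
        symRem (fun k => q (k + (i : ℤ) - (j : ℤ))) (s - i + j) (2 * (j : ℤ) + 1) :=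
  first_family_of_quadratic_forms_general s q i j hji his
end

section
/- Wagon's observation: let q_1, …, q_s be positive integers and let r_1, …, r_{2s+2} be the associated remainder sequence of the symmetric Euclidean scheme with n = r_1. Then for every 0 ≤ i ≤ s, the integer r_{i+1}² + r_{2s+2−i}² is a multiple of n. -/
/-!
Read backwards and with alternating signs, a solution `u` of `u (m + 2) = Q m * u (m + 1) + u m`
with palindromic `Q` of length `N` solves the same recurrence. If `u 0 = 0` and `u 1 = 1`, then
modulo `n = u (N + 1)` the reversed solution also vanishes at `0`, so it is the multiple `-u N` of
`u`. Comparing the two at index `N` gives `u N ^ 2 = -(-1) ^ N`, and squaring the proportionality at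
index `i` gives `u (N + 1 - i) ^ 2 = -(-1) ^ N * u i ^ 2`. The symmetric Euclidean scheme is the
case `N = 2 * s`.
-/

/-- The recurrence satisfied by the remainders of the Euclidean algorithm with `N` quotients
`Q 0, …, Q (N - 1)`, listed from the last division to the first. It constrains only
`u 0, …, u (N + 1)`. -/
def IsRemainderSeq {R : Type*} [CommRing R] (Q : ℕ → R) (N : ℕ) (u : ℕ → R) : Prop :=
  ∀ m < N, u (m + 2) = Q m * u (m + 1) + u m

namespace IsRemainderSeq

variable {R : Type*} [CommRing R] {Q u v : ℕ → R} {N i : ℕ}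

lemma map {S : Type*} [CommRing S] (f : R →+* S) (hu : IsRemainderSeq Q N u) :
    IsRemainderSeq (f ∘ Q) N (f ∘ u) := fun m hm ↦ by
  simp only [Function.comp_apply, hu m hm, map_add, map_mul]

lemma eq_mul {c : R} (hu : IsRemainderSeq Q N u) (hv : IsRemainderSeq Q N v)
    (h₀ : u 0 = c * v 0) (h₁ : u 1 = c * v 1) (hi : i ≤ N + 1) : u i = c * v i := by
  induction i using Nat.twoStepInduction with
  | zero => exact h₀
  | one => exact h₁
  | more m ih ih' =>
    rw [hu m (by omega), hv m (by omega), ih (by omega), ih' (by omega)]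
    ring

lemma reverse (hu : IsRemainderSeq Q N u) (hQ : ∀ k m, k + m + 1 = N → Q k = Q m) :
    IsRemainderSeq Q N fun m ↦ (-1) ^ m * u (N + 1 - m) := by
  intro m hm
  obtain ⟨k, rfl⟩ : ∃ k, N = k + m + 1 := ⟨N - (m + 1), by omega⟩
  have hk : u (k + 2) = Q m * u (k + 1) + u k := hQ k m rfl ▸ hu k (by omega)
  have h₀ : k + m + 1 + 1 - m = k + 2 := by omega
  have h₁ : k + m + 1 + 1 - (m + 1) = k + 1 := by omega
  have h₂ : k + m + 1 + 1 - (m + 2) = k := by omega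
  simp only [h₀, h₁, h₂, hk]
  ring

lemma neg_one_pow_mul_reverse_eq (hu : IsRemainderSeq Q N u)
    (hQ : ∀ k m, k + m + 1 = N → Q k = Q m) (h₀ : u 0 = 0) (h₁ : u 1 = 1)
    (hN : u (N + 1) = 0) (hi : i ≤ N + 1) : (-1) ^ i * u (N + 1 - i) = -u N * u i :=
  (hu.reverse hQ).eq_mul hu (by simp [h₀, hN]) (by simp [h₁]) hi

lemma sq_reverse_add_eq_zero (hu : IsRemainderSeq Q N u)
    (hQ : ∀ k m, k + m + 1 = N → Q k = Q m) (h₀ : u 0 = 0) (h₁ : u 1 = 1)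
    (hN : u (N + 1) = 0) (hi : i ≤ N + 1) : u (N + 1 - i) ^ 2 + (-1) ^ N * u i ^ 2 = 0 := by
  have hlast : (-1) ^ N = -u N * u N := by
    simpa [h₁] using hu.neg_one_pow_mul_reverse_eq hQ h₀ h₁ hN N.le_succ
  have hsq : u (N + 1 - i) ^ 2 = (-u N * u i) ^ 2 := by
    rw [← hu.neg_one_pow_mul_reverse_eq hQ h₀ h₁ hN hi, mul_pow, ← pow_mul, mul_comm i,
      pow_mul, neg_one_sq, one_pow, one_mul]
  rw [hsq, hlast]
  ring

theorem dvd_sq_reverse_add (hu : IsRemainderSeq Q N u)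
    (hQ : ∀ k m, k + m + 1 = N → Q k = Q m) (h₀ : u 0 = 0) (h₁ : u 1 = 1)
    (hi : i ≤ N + 1) : u (N + 1) ∣ u (N + 1 - i) ^ 2 + (-1) ^ N * u i ^ 2 := by
  let π := Ideal.Quotient.mk (Ideal.span {u (N + 1)})
  rw [← Ideal.Quotient.eq_zero_iff_dvd]
  have h := (hu.map π).sq_reverse_add_eq_zero (fun k m hkm ↦ congrArg π (hQ k m hkm))
    (by simp [h₀]) (by simp [h₁])
    ((Ideal.Quotient.eq_zero_iff_dvd _ _).2 dvd_rfl) hi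
  simpa [π] using h

end IsRemainderSeq

lemma symQuot_eq_of_add_eq (q : ℤ → ℤ) {s : ℕ} {k l : ℤ} (h : k + l = 2 * s + 1) :
    symQuot q s k = symQuot q s l := by
  obtain rfl : l = 2 * s + 1 - k := by omega
  unfold symQuot
  split_ifs <;> first | omega | rw [sub_sub_cancel]

lemma isRemainderSeq_symAux (q : ℤ → ℤ) (s N : ℕ) :
    IsRemainderSeq (fun m ↦ symQuot q s (2 * s - m)) N (symAux q s) := fun _ _ ↦ rfl

lemma symRem_eq_symAux (q : ℤ → ℤ) {s m : ℕ} {k : ℤ} (h : k + m = 2 * s + 2) :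
    symRem q s k = symAux q s m := by
  rw [symRem, ← h, add_sub_cancel_left, Int.toNat_natCast]

theorem wagon_observation_general (s : ℕ) (q : ℤ → ℤ) (i : ℕ) (hi : i ≤ 2 * s + 1) :
    symRem q s 1 ∣
      symRem q s ((i : ℤ) + 1) ^ 2 + symRem q s (2 * (s : ℤ) + 2 - (i : ℤ)) ^ 2 := by
  rw [symRem_eq_symAux q (m := 2 * s + 1) (by push_cast; ring),
    symRem_eq_symAux q (m := 2 * s + 1 - i) (by omega),
    symRem_eq_symAux q (m := i) (by ring)]
  have hpalindrome (k m : ℕ) (hkm : k + m + 1 = 2 * s) :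
      symQuot q s (2 * s - k) = symQuot q s (2 * s - m) :=
    symQuot_eq_of_add_eq q (by omega)
  simpa [pow_mul] using
    (isRemainderSeq_symAux q s (2 * s)).dvd_sq_reverse_add hpalindrome rfl rfl hi

theorem wagon_observation
    (s : ℕ) (hs : 1 ≤ s) (q : ℤ → ℤ) (hq : ∀ k : ℤ, 1 ≤ k → k ≤ (s : ℤ) → 0 < q k)
    (i : ℕ) (his : i ≤ s) :
    symRem q s 1 ∣
      symRem q s ((i : ℤ) + 1) ^ 2 + symRem q s (2 * (s : ℤ) + 2 - (i : ℤ)) ^ 2 :=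
  wagon_observation_general s q i (by omega)
end

section
/- Floor identity from the proof of the Corollary: let q_1, …, q_s be positive integers with s ≥ 2 and let r_1, …, r_{2s+2} be the associated remainder sequence of the symmetric Euclidean scheme with n = r_1 and a = r_2. Then ⌊n·a/(a²+1)⌋ = ⌊n/a⌋ = q_1; equivalently, writing m = (a²+1)/n (an integer), one has ⌊a/m⌋ = ⌊n/a⌋. -/
/-!
Since `r_{2s} = Q_{2s} = q_1` and the remainders decrease strictly on `[1, 2s]`, the first Euclidean
step `n = q_1 a + r_3` satisfies `0 < r_3 < a` and `q_1 ≤ a ≤ r_3 a`. The bounds on `r_3` give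
`⌊n / a⌋ = q_1`. Multiplying by `a`, `n a = q_1 (a² + 1) + (r_3 a - q_1)` with
`0 ≤ r_3 a - q_1 < a² + 1`, so `⌊n a / (a² + 1)⌋ = q_1` as well.
-/

section Floor

variable {K : Type*} [Field K] [LinearOrder K] [IsStrictOrderedRing K] [FloorRing K]

theorem floor_mul_add_div_eq {p : ℤ} {b c : K} (hc : 0 ≤ c) (hcb : c < b) :
    ⌊(p * b + c) / b⌋ = p := by
  have hb : 0 < b := hc.trans_lt hcb
  rw [add_div, mul_div_cancel_right₀ _ hb.ne', Int.floor_intCast_add,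
    Int.floor_eq_zero_iff.mpr ⟨div_nonneg hc hb.le, (div_lt_one hb).mpr hcb⟩, add_zero]

theorem floor_mul_add_mul_div_sq_add_one_eq {p : ℤ} {a r : K} (hp : 0 ≤ p) (ha : 0 ≤ a)
    (hra : r ≤ a) (hpra : p ≤ r * a) : ⌊(p * a + r) * a / (a ^ 2 + 1)⌋ = p := by
  have hp' : (0 : K) ≤ p := Int.cast_nonneg hp
  have hsplit : (p * a + r) * a = p * (a ^ 2 + 1) + (r * a - p) := by ring
  have hlt : r * a - p < a ^ 2 + 1 := by linarith [mul_le_mul_of_nonneg_right hra ha, sq a]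
  rw [hsplit, floor_mul_add_div_eq (sub_nonneg.mpr hpra) hlt]

end Floor

section Scheme

variable {q : ℤ → ℤ} {s : ℕ} {k : ℤ}

theorem symQuot_of_le (hk : k ≤ s) : symQuot q s k = q k :=
  if_pos hk

theorem symQuot_of_lt (hk : s < k) : symQuot q s k = q (2 * s + 1 - k) :=
  if_neg hk.not_ge

theorem symQuot_pos (hq : ∀ k : ℤ, 1 ≤ k → k ≤ s → 0 < q k) (hk : 1 ≤ k) (hks : k ≤ 2 * s) :
    0 < symQuot q s k := by
  rcases le_or_gt k s with h | h
  · rw [symQuot_of_le h]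
    exact hq k hk h
  · rw [symQuot_of_lt h]
    exact hq _ (by lia) (by lia)

theorem symRem_two_mul_add_two : symRem q s (2 * s + 2) = 0 := by
  simp [symRem, symAux]

theorem symRem_two_mul_add_one : symRem q s (2 * s + 1) = 1 := by
  have hindex : (2 * (s : ℤ) + 2 - (2 * s + 1)).toNat = 1 := by lia
  rw [symRem, hindex, symAux]

theorem symRem_eq_symQuot_mul_add (hk : k ≤ 2 * s) :
    symRem q s k = symQuot q s k * symRem q s (k + 1) + symRem q s (k + 2) := by
  obtain ⟨m, rfl⟩ : ∃ m : ℕ, k = 2 * s - m := ⟨(2 * s - k).toNat, by lia⟩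
  have hindex : (2 * (s : ℤ) + 2 - (2 * s - m)).toNat = m + 2 := by lia
  have hindex_add_one : (2 * (s : ℤ) + 2 - (2 * s - m + 1)).toNat = m + 1 := by lia
  have hindex_add_two : (2 * (s : ℤ) + 2 - (2 * s - m + 2)).toNat = m := by lia
  simp only [symRem, hindex, hindex_add_one, hindex_add_two, symAux]

theorem symRem_one (hs : 1 ≤ s) : symRem q s 1 = q 1 * symRem q s 2 + symRem q s 3 := by
  rw [symRem_eq_symQuot_mul_add (by lia), symQuot_of_le (by lia)]
  norm_num

theorem symRem_two_mul (hs : 1 ≤ s) : symRem q s (2 * s) = q 1 := by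
  rw [symRem_eq_symQuot_mul_add le_rfl, symRem_two_mul_add_one, symRem_two_mul_add_two,
    symQuot_of_lt (by lia), add_sub_cancel_left, mul_one, add_zero]

theorem symRem_pos (hq : ∀ k : ℤ, 1 ≤ k → k ≤ s → 0 < q k) (hk : 1 ≤ k) (hks : k ≤ 2 * s + 1) :
    0 < symRem q s k := by
  suffices h : 1 ≤ k → 0 < symRem q s k ∧ 0 ≤ symRem q s (k + 1) from (h hk).1
  clear hk
  induction k, hks using Int.leInductionDown with
  | base =>
    intro _
    rw [add_assoc, one_add_one_eq_two, symRem_two_mul_add_one, symRem_two_mul_add_two]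
    exact ⟨one_pos, le_rfl⟩
  | pred k hks ih =>
    intro hk
    obtain ⟨hpos, hnonneg⟩ := ih (by lia)
    have hrec := symRem_eq_symQuot_mul_add (q := q) (s := s) (k := k - 1) (by lia)
    rw [sub_add_cancel, show k - 1 + 2 = k + 1 by ring] at hrec
    rw [sub_add_cancel, hrec]
    exact ⟨add_pos_of_pos_of_nonneg (mul_pos (symQuot_pos hq hk (by lia)) hpos) hnonneg, hpos.le⟩

theorem symRem_add_one_lt (hq : ∀ k : ℤ, 1 ≤ k → k ≤ s → 0 < q k) (hk : 1 ≤ k) (hks : k < 2 * s) :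
    symRem q s (k + 1) < symRem q s k :=
  calc symRem q s (k + 1)
      ≤ symQuot q s k * symRem q s (k + 1) :=
        le_mul_of_one_le_left (symRem_pos hq (by lia) (by lia)).le (symQuot_pos hq hk hks.le)
    _ < symQuot q s k * symRem q s (k + 1) + symRem q s (k + 2) :=
        lt_add_of_pos_right _ (symRem_pos hq (by lia) (by lia))
    _ = symRem q s k := (symRem_eq_symQuot_mul_add hks.le).symm

theorem strictAntiOn_symRem (hq : ∀ k : ℤ, 1 ≤ k → k ≤ s → 0 < q k) :
    StrictAntiOn (symRem q s) (Set.Icc 1 (2 * s)) :=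
  strictAntiOn_of_add_one_lt Set.ordConnected_Icc fun _ _ hk hk' =>
    symRem_add_one_lt hq hk.1 (Int.lt_of_add_one_le hk'.2)

end Scheme

theorem floor_identity_of_corollary
    (s : ℕ) (hs : 2 ≤ s) (q : ℤ → ℤ) (hq : ∀ k : ℤ, 1 ≤ k → k ≤ (s : ℤ) → 0 < q k) :
    ⌊((symRem q s 1 : ℚ) * (symRem q s 2 : ℚ)) / ((symRem q s 2 : ℚ) ^ 2 + 1)⌋ =
        ⌊(symRem q s 1 : ℚ) / (symRem q s 2 : ℚ)⌋ ∧
      ⌊(symRem q s 1 : ℚ) / (symRem q s 2 : ℚ)⌋ = q 1 := by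
  have hq_one : 0 < q 1 := hq 1 le_rfl (by lia)
  have hr_pos : 0 < symRem q s 3 := symRem_pos hq (by lia) (by lia)
  have hr_lt : symRem q s 3 < symRem q s 2 := symRem_add_one_lt hq (by lia) (by lia)
  have hq_le : q 1 ≤ symRem q s 3 * symRem q s 2 :=
    calc q 1 = symRem q s (2 * s) := (symRem_two_mul (by lia)).symm
      _ ≤ symRem q s 2 :=
        (strictAntiOn_symRem hq).antitoneOn ⟨by lia, by lia⟩ ⟨by lia, by lia⟩ (by lia)
      _ ≤ symRem q s 3 * symRem q s 2 := le_mul_of_one_le_left (hr_pos.trans hr_lt).le hr_pos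
  rw [symRem_one (by lia)]
  push_cast
  rw [floor_mul_add_div_eq (by exact_mod_cast hr_pos.le) (by exact_mod_cast hr_lt),
    floor_mul_add_mul_div_sq_add_one_eq hq_one.le (by exact_mod_cast (hr_pos.trans hr_lt).le)
      (by exact_mod_cast hr_lt.le) (by exact_mod_cast hq_le)]
  exact ⟨rfl, rfl⟩
end
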